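/- Let n ≥ 2 and 1 ≤ d ≤ n−1 be integers and let w be a weight such that there exist c_w, C_w > 0 with c_w² ≤ W_k ≤ C_w² for every k ∈ ℤ^n. Let α > 0, r, s ∈ ℝ with s ≥ r, and g ∈ L_r^{2,2}(X_{d,n};w). Then the Tikhonov functional f ↦ ‖R_d f − g‖²_{L_r^{2,2}(X_{d,n};w)} + α‖f‖²_{H^s(𝕋^n)} has a unique minimizer among periodic distributions, given by f = P_{w,s−r}^α R_d^* g, and this minimizer belongs to H^{2s−r}(𝕋^n). -/

import Mathlib

/-!
Setting: the flat torus 𝕋ⁿ = ℝⁿ/ℤⁿ and its d-plane Radon transform.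

* Periodic distributions 𝒯' are modeled, via the structure theorem, by their
  Fourier coefficient sequences `ℤⁿ → ℂ` of at most polynomial growth (`PDist`).
* `Gr d n` is the Grassmannian of d-dimensional subspaces of ℚⁿ.
* The d-plane Radon transform is encoded on the Fourier side by the Fourier
  slice identity `(R_{d,A} f)^(k) = f̂(k)` if `k ⊥ A` and `0` otherwise (`radonC`).
* `hsNormSq s c = Σ_k ⟨k⟩^{2s} |c k|²` is the squared H^s(𝕋ⁿ) norm (in ℝ≥0∞),
  `dataNormSq s w g = Σ_A Σ_k ⟨k⟩^{2s} w(k,A)² |ĝ(k,A)|²` is the squared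
  L_s^{2,2}(X_{d,n}; w) norm, `hsNorm`/`dataNorm` are their square roots.
* `Wk w k = Σ_{A ∈ Ω_k} w(k,A)²` and `radonStar` is the adjoint
  `(R_d^* g)^(k) = Σ_{A ∈ Ω_k} w(k,A)² ĝ(k,A)`.
-/

open scoped ENNReal BigOperators
open MeasureTheory Classical Filter

noncomputable section

abbrev Zn (n : ℕ) := Fin n → ℤ
abbrev Tn (n : ℕ) := Fin n → AddCircle (1 : ℝ)

/-- Japanese bracket ⟨k⟩ = (1+|k|²)^{1/2}. -/
def jap {n : ℕ} (k : Zn n) : ℝ := Real.sqrt (1 + ∑ i, ((k i : ℝ))^2)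

/-- Periodic distributions on 𝕋ⁿ, modeled via their Fourier coefficients
(structure theorem: 𝒯' ≅ sequences of at most polynomial growth). -/
structure PDist (n : ℕ) where
  coef : Zn n → ℂ
  growth : ∃ C N : ℝ, 0 < C ∧ ∀ k, ‖coef k‖ ≤ C * jap k ^ N

/-- Grassmannian of d-dimensional subspaces of ℚⁿ. -/
def Gr (d n : ℕ) := {A : Submodule ℚ (Fin n → ℚ) // Module.finrank ℚ A = d}

/-- `k ⊥ A`. -/
def perp {d n : ℕ} (k : Zn n) (A : Gr d n) : Prop :=
  ∀ v ∈ A.1, ∑ i, (k i : ℚ) * v i = 0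

/-- A weight `w : ℤⁿ × Gr(d,n) → (0,∞)` with at most polynomial decay in each
variable `A`. -/
def IsWeight {d n : ℕ} (w : Zn n → Gr d n → ℝ) : Prop :=
  (∀ k A, 0 < w k A) ∧ ∀ A : Gr d n, ∃ C N : ℝ, 0 < C ∧ ∀ k, C * jap k ^ (-N) ≤ w k A

/-- Fourier-slice definition of the d-plane Radon transform `R_{d,A}`
on Fourier coefficient sequences. -/
def radonC {d n : ℕ} (A : Gr d n) (c : Zn n → ℂ) : Zn n → ℂ :=
  fun k => if perp k A then c k else 0

/-- The d-plane Radon transform `R_{d,A}` on periodic distributions. -/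
def radonD {d n : ℕ} (A : Gr d n) (f : PDist n) : PDist n :=
  ⟨radonC A f.coef, by
    obtain ⟨C, N, hC, h⟩ := f.growth
    refine ⟨C, N, hC, fun k => ?_⟩
    by_cases hk : perp k A
    · simpa [radonC, hk] using h k
    · simp only [radonC, hk, if_false, norm_zero]
      have h1 : 0 ≤ jap k ^ N := Real.rpow_nonneg (Real.sqrt_nonneg _) N
      positivity⟩

/-- Squared H^s(𝕋ⁿ) norm `Σ_k ⟨k⟩^{2s}|c k|²` (possibly infinite). -/
def hsNormSq {n : ℕ} (s : ℝ) (c : Zn n → ℂ) : ℝ≥0∞ :=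
  ∑' k : Zn n, ENNReal.ofReal (jap k ^ (2*s) * ‖c k‖^2)

/-- H^s(𝕋ⁿ) norm (possibly infinite). -/
def hsNorm {n : ℕ} (s : ℝ) (c : Zn n → ℂ) : ℝ≥0∞ := hsNormSq s c ^ (1/2 : ℝ)

/-- Squared L_s^{2,2}(X_{d,n}; w) norm (possibly infinite). -/
def dataNormSq {d n : ℕ} (s : ℝ) (w : Zn n → Gr d n → ℝ) (g : Gr d n → Zn n → ℂ) : ℝ≥0∞ :=
  ∑' A : Gr d n, ∑' k : Zn n, ENNReal.ofReal (jap k ^ (2*s) * (w k A)^2 * ‖g A k‖^2)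

/-- L_s^{2,2}(X_{d,n}; w) norm (possibly infinite). -/
def dataNorm {d n : ℕ} (s : ℝ) (w : Zn n → Gr d n → ℝ) (g : Gr d n → Zn n → ℂ) : ℝ≥0∞ :=
  dataNormSq s w g ^ (1/2 : ℝ)

/-- `W_k = Σ_{A ∈ Ω_k} w(k,A)²`. -/
def Wk {d n : ℕ} (w : Zn n → Gr d n → ℝ) (k : Zn n) : ℝ :=
  ∑' A : {A : Gr d n // perp k A}, (w k A.1)^2

/-- The adjoint `R_d^*`: `(R_d^* g)^(k) = Σ_{A ∈ Ω_k} w(k,A)² ĝ(k,A)`. -/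
def radonStar {d n : ℕ} (w : Zn n → Gr d n → ℝ) (g : Gr d n → Zn n → ℂ) : Zn n → ℂ :=
  fun k => ∑' A : {A : Gr d n // perp k A}, ((w k A.1 : ℝ) : ℂ)^2 * g A.1 k

/-- Symbol of the Fourier multiplier `P_{w,z}^α`:
`p_{w,z}^α(k) = 1/(W_k + α⟨k⟩^{2z})`. -/
def pSymb {d n : ℕ} (w : Zn n → Gr d n → ℝ) (z α : ℝ) (k : Zn n) : ℝ :=
  (Wk w k + α * jap k ^ (2*z))⁻¹

/-- The Tikhonov functional
`f ↦ ‖R_d f − g‖²_{L_r^{2,2}(X_{d,n};w)} + α ‖f‖²_{H^s(𝕋ⁿ)}` (in ℝ≥0∞). -/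
def tikhF {d n : ℕ} (r s α : ℝ) (w : Zn n → Gr d n → ℝ)
    (g : Gr d n → Zn n → ℂ) (f : PDist n) : ℝ≥0∞ :=
  dataNormSq r w (fun A k => radonC A f.coef k - g A k)
    + ENNReal.ofReal α * hsNormSq s f.coef

lemma jap_pos {n : ℕ} (k : Zn n) : 0 < jap k := by
  unfold jap
  apply Real.sqrt_pos.mpr
  have : 0 ≤ ∑ i, ((k i : ℝ))^2 := Finset.sum_nonneg (fun i _ => sq_nonneg _)
  linarith

lemma aux_sq (z g : ℂ) : ‖z - g‖^2 = ‖z‖^2 - 2 * ((starRingEnd ℂ z) * g).re + ‖g‖^2 := by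
  rw [← Complex.normSq_eq_norm_sq, ← Complex.normSq_eq_norm_sq, ← Complex.normSq_eq_norm_sq]
  simp only [Complex.normSq_apply, Complex.mul_re, Complex.conj_re, Complex.conj_im,
    Complex.sub_re, Complex.sub_im]
  ring

/-- expansion of the fibre sum -/
lemma aux_hasSum {ι : Type*} (P : ι → Prop) (v : ι → ℝ) (g : ι → ℂ)
    (hv : Summable (fun A : {A // P A} => v A.1 ^ 2))
    (hG : Summable (fun A => v A ^ 2 * ‖g A‖ ^ 2)) (z : ℂ) :
    HasSum (fun A => v A ^ 2 * ‖(if P A then z else 0) - g A‖ ^ 2)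
      ((∑' A : {A // P A}, v A.1 ^ 2) * ‖z‖ ^ 2
        - 2 * ((starRingEnd ℂ z) * (∑' A : {A // P A}, ((v A.1 : ℝ) : ℂ) ^ 2 * g A.1)).re
        + ∑' A, v A ^ 2 * ‖g A‖ ^ 2) := by
  have hb : Summable (fun A : {A // P A} => ((v A.1 : ℝ) : ℂ) ^ 2 * g A.1) := by
    refine Summable.of_norm_bounded (g := fun A : {A // P A} =>
      v A.1 ^ 2 + v A.1 ^ 2 * ‖g A.1‖ ^ 2) (hv.add (hG.comp_injective Subtype.val_injective)) ?_
    intro A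
    rw [norm_mul, norm_pow, Complex.norm_real, Real.norm_eq_abs, sq_abs]
    nlinarith [sq_nonneg (v A.1), mul_nonneg (sq_nonneg (v A.1)) (sq_nonneg (‖g A.1‖ - 1)),
      mul_nonneg (sq_nonneg (v A.1)) (sq_nonneg (‖g A.1‖))]
  have h1 := ((hasSum_subtype_iff_indicator (s := {A | P A}) (f := fun A => v A ^ 2)).mp
    hv.hasSum).mul_right (‖z‖ ^ 2)
  have h2 := (Complex.hasSum_re (((hasSum_subtype_iff_indicator (s := {A | P A})
    (f := fun A => ((v A : ℝ) : ℂ) ^ 2 * g A)).mp hb.hasSum).mul_left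
      (starRingEnd ℂ z))).mul_left 2
  have h3 := (h1.sub h2).add hG.hasSum
  refine (congrArg (fun F => HasSum F _) (funext fun A => ?_)).mpr h3
  by_cases hA : P A
  · have e1 : ((starRingEnd ℂ z) * (((v A : ℝ) : ℂ) ^ 2 * g A)).re
        = v A ^ 2 * ((starRingEnd ℂ z) * g A).re := by
      rw [← Complex.re_ofReal_mul]
      congr 1
      push_cast
      ring
    have hA' : A ∈ {A | P A} := hA
    simp only [if_pos hA, Set.indicator_of_mem hA', e1, aux_sq]
    ring
  · have hA' : A ∉ {A | P A} := hA
    simp [if_neg hA, Set.indicator_of_notMem hA']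

lemma aux_cs {W G : ℝ} {b : ℂ} (hW : 0 < W)
    (h : ∀ z : ℂ, 0 ≤ W * ‖z‖ ^ 2 - 2 * ((starRingEnd ℂ z) * b).re + G) :
    ‖b‖ ^ 2 ≤ W * G := by
  have h1 := h (((W⁻¹ : ℝ) : ℂ) * b)
  have e : ((starRingEnd ℂ (((W⁻¹ : ℝ) : ℂ) * b)) * b).re = W⁻¹ * ‖b‖ ^ 2 := by
    rw [map_mul, Complex.conj_ofReal, mul_assoc, Complex.re_ofReal_mul,
      ← Complex.normSq_eq_norm_sq, Complex.normSq_apply]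
    simp
  rw [e, norm_mul, Complex.norm_real, Real.norm_eq_abs, mul_pow, sq_abs] at h1
  have e2 : W * (W⁻¹ ^ 2 * ‖b‖ ^ 2) = W⁻¹ * ‖b‖ ^ 2 := by field_simp
  rw [e2] at h1
  have h2 : W⁻¹ * ‖b‖ ^ 2 ≤ G := by linarith
  calc ‖b‖ ^ 2 = W * (W⁻¹ * ‖b‖ ^ 2) := by field_simp
    _ ≤ W * G := by gcongr

lemma aux_quad (W q α : ℝ) (b z z0 : ℂ) (hb : b = ((W + α * q : ℝ) : ℂ) * z0) (G J : ℝ) :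
    J * (W * ‖z‖ ^ 2 - 2 * ((starRingEnd ℂ z) * b).re + G) + α * (J * q * ‖z‖ ^ 2)
     = (J * (W * ‖z0‖ ^ 2 - 2 * ((starRingEnd ℂ z0) * b).re + G) + α * (J * q * ‖z0‖ ^ 2))
       + J * (W + α * q) * ‖z - z0‖ ^ 2 := by
  have e : ∀ y : ℂ, ((starRingEnd ℂ y) * b).re = (W + α * q) * ((starRingEnd ℂ y) * z0).re := by
    intro y
    rw [hb, ← Complex.re_ofReal_mul]
    congr 1
    ring
  have e0 : ((starRingEnd ℂ z0) * z0).re = ‖z0‖ ^ 2 := by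
    rw [← Complex.normSq_eq_norm_sq, Complex.normSq_apply]
    simp
  rw [e, e, e0, aux_sq]
  ring

/-- Solution of the Tikhonov minimization problem.
For `α > 0`, `s ≥ r` and `g ∈ L_r^{2,2}(X_{d,n};w)`, the Tikhonov functional
has a unique minimizer among periodic distributions; the minimizer is
`f = P_{w,s−r}^α R_d^* g`, and it belongs to `H^{2s−r}(𝕋ⁿ)`. -/
theorem statement7 {n d : ℕ} (hn : 2 ≤ n) (hd1 : 1 ≤ d) (hd2 : d ≤ n - 1)
    (w : Zn n → Gr d n → ℝ) (hw : IsWeight w) (cw Cw : ℝ) (hcw : 0 < cw) (hCw : 0 < Cw)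
    (hWsum : ∀ k : Zn n, Summable (fun A : {A : Gr d n // perp k A} => (w k A.1) ^ 2))
    (hWlb : ∀ k : Zn n, cw ^ 2 ≤ Wk w k) (hWub : ∀ k : Zn n, Wk w k ≤ Cw ^ 2)
    (α : ℝ) (hα : 0 < α) (r s : ℝ) (hsr : r ≤ s)
    (g : Gr d n → PDist n) (hg : dataNormSq r w (fun A => (g A).coef) < ∞) :
    ∃ f₀ : PDist n,
      (∀ k : Zn n,
        f₀.coef k = ((pSymb w (s - r) α k : ℝ) : ℂ) * radonStar w (fun A => (g A).coef) k) ∧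
      hsNormSq (2*s - r) f₀.coef < ∞ ∧
      (∀ f : PDist n,
        tikhF r s α w (fun A => (g A).coef) f₀ ≤ tikhF r s α w (fun A => (g A).coef) f) ∧
      (∀ f : PDist n,
        (∀ f' : PDist n,
          tikhF r s α w (fun A => (g A).coef) f ≤ tikhF r s α w (fun A => (g A).coef) f') →
        f.coef = f₀.coef) := by
  classical
  set gc : Gr d n → Zn n → ℂ := fun A => (g A).coef with hgc
  have hJ : ∀ (k : Zn n) (t : ℝ), 0 < jap k ^ t := fun k t => Real.rpow_pos_of_pos (jap_pos k) t
  have hWpos : ∀ k, 0 < Wk w k := fun k => lt_of_lt_of_le (by positivity) (hWlb k)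
  -- fibrewise summability of the data
  have hswap : dataNormSq r w gc
      = ∑' k, ∑' A, ENNReal.ofReal (jap k ^ (2*r) * (w k A)^2 * ‖gc A k‖^2) := by
    unfold dataNormSq
    exact ENNReal.tsum_comm
  have hG : ∀ k, Summable (fun A => w k A ^ 2 * ‖gc A k‖ ^ 2) := by
    intro k
    have h1 : ∑' A, ENNReal.ofReal (jap k ^ (2*r) * (w k A)^2 * ‖gc A k‖^2) ≠ ∞ := by
      refine ne_top_of_le_ne_top hg.ne ?_
      rw [hswap]
      exact ENNReal.le_tsum (f := fun k => ∑' A, ENNReal.ofReal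
        (jap k ^ (2*r) * (w k A)^2 * ‖gc A k‖^2)) k
    have h2 := (ENNReal.summable_toReal h1).mul_left (jap k ^ (2*r))⁻¹
    refine h2.congr ?_
    intro A
    have := hJ k (2*r)
    rw [ENNReal.toReal_ofReal (by positivity)]
    field_simp
  set G : Zn n → ℝ := fun k => ∑' A, w k A ^ 2 * ‖gc A k‖ ^ 2 with hGdef
  have hG0 : ∀ k, 0 ≤ G k := fun k => tsum_nonneg (fun A => by positivity)
  have hS : ∀ (k : Zn n) (z : ℂ),
      HasSum (fun A : Gr d n => w k A ^ 2 * ‖(if perp k A then z else 0) - gc A k‖ ^ 2)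
      (Wk w k * ‖z‖ ^ 2 - 2 * ((starRingEnd ℂ z) * radonStar w gc k).re + G k) := by
    intro k z
    exact aux_hasSum (fun A => perp k A) (w k) (fun A => gc A k) (hWsum k) (hG k) z
  set Q : Zn n → ℂ → ℝ := fun k z =>
    Wk w k * ‖z‖ ^ 2 - 2 * ((starRingEnd ℂ z) * radonStar w gc k).re + G k with hQ
  have hQ0 : ∀ k z, 0 ≤ Q k z := fun k z => (hS k z).nonneg (fun A => by positivity)
  have hfib : ∀ (k : Zn n) (z : ℂ), ∑' A : Gr d n, ENNReal.ofReal
      (jap k ^ (2*r) * w k A ^ 2 * ‖(if perp k A then z else 0) - gc A k‖ ^ 2)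
      = ENNReal.ofReal (jap k ^ (2*r) * Q k z) := by
    intro k z
    have h := (hS k z).mul_left (jap k ^ (2*r))
    have := hJ k (2*r)
    rw [show jap k ^ (2*r) * Q k z = _ from h.tsum_eq.symm,
      ENNReal.ofReal_tsum_of_nonneg (fun A => by positivity) h.summable]
    simp only [mul_assoc]
  have htik : ∀ f : PDist n, tikhF r s α w gc f
      = ∑' k, ENNReal.ofReal (jap k ^ (2*r) * Q k (f.coef k)
          + α * (jap k ^ (2*s) * ‖f.coef k‖ ^ 2)) := by
    intro f
    unfold tikhF dataNormSq hsNormSq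
    rw [ENNReal.tsum_comm, ← ENNReal.tsum_mul_left, ← ENNReal.tsum_add]
    refine tsum_congr fun k => ?_
    have := hJ k (2*r)
    have := hJ k (2*s)
    rw [ENNReal.ofReal_add (mul_nonneg (hJ k _).le (hQ0 k _)) (by positivity),
      ENNReal.ofReal_mul hα.le, ← hfib]
    rfl
  -- Cauchy-Schwarz
  have hCS : ∀ k, ‖radonStar w gc k‖ ^ 2 ≤ Wk w k * G k := fun k => aux_cs (hWpos k) (hQ0 k)
  set z0 : Zn n → ℂ := fun k =>
    ((pSymb w (s - r) α k : ℝ) : ℂ) * radonStar w gc k with hz0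
  have hden : ∀ k, 0 < Wk w k + α * jap k ^ (2*(s-r)) := fun k =>
    add_pos (hWpos k) (mul_pos hα (hJ k _))
  have hb : ∀ k, radonStar w gc k = ((Wk w k + α * jap k ^ (2*(s-r)) : ℝ) : ℂ) * z0 k := by
    intro k
    simp only [hz0, pSymb]
    rw [← mul_assoc, ← Complex.ofReal_mul, mul_inv_cancel₀ (hden k).ne', Complex.ofReal_one,
      one_mul]
  have hbound : ∀ k, jap k ^ (2*(2*s-r)) * ‖z0 k‖ ^ 2
      ≤ (Cw ^ 2 / α ^ 2) * (jap k ^ (2*r) * G k) := by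
    intro k
    have hq := hJ k (2*(s-r))
    have hr := hJ k (2*r)
    have e : jap k ^ (2*(2*s-r)) = jap k ^ (2*r) * (jap k ^ (2*(s-r))) ^ 2 := by
      rw [pow_two, ← Real.rpow_add (jap_pos k), ← Real.rpow_add (jap_pos k)]
      congr 1; ring
    have h1 : α * jap k ^ (2*(s-r)) * ‖z0 k‖ ≤ ‖radonStar w gc k‖ := by
      have h0 : ‖radonStar w gc k‖ = (Wk w k + α * jap k ^ (2*(s-r))) * ‖z0 k‖ := by
        have h00 := congrArg norm (hb k)
        rwa [norm_mul ((_ : ℝ) : ℂ) (z0 k), Complex.norm_real, Real.norm_eq_abs,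
          abs_of_pos (hden k)] at h00
      rw [h0]
      refine mul_le_mul_of_nonneg_right ?_ (norm_nonneg _)
      linarith [hWpos k]
    have h2 : (α * jap k ^ (2*(s-r)) * ‖z0 k‖) ^ 2 ≤ Cw ^ 2 * G k :=
      calc _ ≤ ‖radonStar w gc k‖ ^ 2 := by gcongr
        _ ≤ Wk w k * G k := hCS k
        _ ≤ _ := mul_le_mul_of_nonneg_right (hWub k) (hG0 k)
    rw [e]
    calc _ = (jap k ^ (2*r) / α ^ 2) * (α * jap k ^ (2*(s-r)) * ‖z0 k‖) ^ 2 := by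
          field_simp
      _ ≤ (jap k ^ (2*r) / α ^ 2) * (Cw ^ 2 * G k) := by gcongr
      _ = _ := by ring
  have hsum : hsNormSq (2*s-r) z0 < ∞ := by
    have h1 : dataNormSq r w gc = ∑' k, ENNReal.ofReal (jap k ^ (2*r) * G k) := by
      rw [hswap]
      refine tsum_congr fun k => ?_
      have := hfib k 0
      simpa [hQ] using this
    calc hsNormSq (2*s-r) z0
        ≤ ∑' k, ENNReal.ofReal (Cw ^ 2 / α ^ 2) * ENNReal.ofReal (jap k ^ (2*r) * G k) := by
          unfold hsNormSq
          refine ENNReal.tsum_le_tsum fun k => ?_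
          rw [← ENNReal.ofReal_mul (by positivity)]
          exact ENNReal.ofReal_le_ofReal (hbound k)
      _ = ENNReal.ofReal (Cw ^ 2 / α ^ 2) * dataNormSq r w gc := by
          rw [ENNReal.tsum_mul_left, h1]
      _ < ∞ := ENNReal.mul_lt_top ENNReal.ofReal_lt_top hg
  have hgrow : ∃ C N : ℝ, 0 < C ∧ ∀ k, ‖z0 k‖ ≤ C * jap k ^ N := by
    refine ⟨(hsNormSq (2*s-r) z0).toReal + 1, -(2*s-r),
      add_pos_of_nonneg_of_pos ENNReal.toReal_nonneg one_pos, fun k => ?_⟩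
    have h1 : jap k ^ (2*(2*s-r)) * ‖z0 k‖ ^ 2 ≤ (hsNormSq (2*s-r) z0).toReal := by
      rw [← ENNReal.ofReal_le_iff_le_toReal hsum.ne]
      exact ENNReal.le_tsum (f := fun k => ENNReal.ofReal (jap k ^ (2*(2*s-r)) * ‖z0 k‖ ^ 2)) k
    have hp := hJ k (2*s-r)
    have e : jap k ^ (2*(2*s-r)) = (jap k ^ (2*s-r)) ^ 2 := by
      rw [pow_two, ← Real.rpow_add (jap_pos k)]
      congr 1; ring
    rw [e, ← mul_pow] at h1
    have hM : 0 ≤ (hsNormSq (2*s-r) z0).toReal := ENNReal.toReal_nonneg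
    have h2 : jap k ^ (2*s-r) * ‖z0 k‖ ≤ (hsNormSq (2*s-r) z0).toReal + 1 := by
      refine abs_le_of_sq_le_sq' ?_ (by positivity) |>.2
      nlinarith
    rw [Real.rpow_neg (jap_pos k).le, ← div_eq_mul_inv, le_div_iff₀ hp]
    linarith
  have hkey : ∀ f : PDist n, tikhF r s α w gc f = tikhF r s α w gc ⟨z0, hgrow⟩
      + ∑' k, ENNReal.ofReal (jap k ^ (2*r) * (Wk w k + α * jap k ^ (2*(s-r)))
          * ‖f.coef k - z0 k‖ ^ 2) := by
    intro f
    rw [htik, htik, ← ENNReal.tsum_add]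
    refine tsum_congr fun k => ?_
    have hr := hJ k (2*r)
    have hs := hJ k (2*s)
    have hd := hden k
    rw [← ENNReal.ofReal_add (add_nonneg (mul_nonneg hr.le (hQ0 k _)) (by positivity))
      (by positivity)]
    have e : jap k ^ (2*s) = jap k ^ (2*r) * jap k ^ (2*(s-r)) := by
      rw [← Real.rpow_add (jap_pos k)]
      congr 1; ring
    rw [e]
    congr 1
    exact aux_quad (Wk w k) (jap k ^ (2*(s-r))) α (radonStar w gc k) (f.coef k) (z0 k) (hb k)
      (G k) (jap k ^ (2*r))
  refine ⟨⟨z0, hgrow⟩, fun k => rfl, hsum, fun f => ?_, fun f hf => ?_⟩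
  · rw [hkey f]
    exact le_self_add
  · have hfin : tikhF r s α w gc ⟨z0, hgrow⟩ ≠ ∞ := by
      let zz : PDist n := ⟨fun _ => 0, 1, 0, one_pos, fun k => by simp⟩
      have h0 : tikhF r s α w gc zz = dataNormSq r w gc := by
        simp [tikhF, dataNormSq, hsNormSq, radonC, zz]
      refine ne_top_of_le_ne_top hg.ne ?_
      rw [← h0, hkey zz]
      exact le_self_add
    have h1 := hf ⟨z0, hgrow⟩
    rw [hkey f] at h1
    have h2 : ∑' k, ENNReal.ofReal (jap k ^ (2*r) * (Wk w k + α * jap k ^ (2*(s-r)))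
          * ‖f.coef k - z0 k‖ ^ 2) = 0 := by
      have h3 := (ENNReal.add_le_add_iff_left hfin).mp (h1.trans (add_zero _).ge)
      exact le_antisymm h3 bot_le
    rw [ENNReal.tsum_eq_zero] at h2
    funext k
    have h3 := ENNReal.ofReal_eq_zero.mp (h2 k)
    have hpos : 0 < jap k ^ (2*r) * (Wk w k + α * jap k ^ (2*(s-r))) :=
      mul_pos (hJ k _) (hden k)
    by_contra hne
    have : 0 < ‖f.coef k - z0 k‖ := norm_pos_iff.mpr (sub_ne_zero.mpr hne)
    have : 0 < jap k ^ (2*r) * (Wk w k + α * jap k ^ (2*(s-r))) * ‖f.coef k - z0 k‖ ^ 2 := by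
      positivity
    linarith
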